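/- Let D ⊆ Δ⁺ be a basic subset with diagram as defined and C(D) = {ξ_1 ≻ … ≻ ξ_c}. Then: (a) w_D = r_{ξ_1} ∘ r_{ξ_2} ∘ ⋯ ∘ r_{ξ_c}; (b) w_i(ξ_j) > 0 for all 1 ≤ i < j ≤ c; (c) ξ_j ∉ M(D) for all 1 ≤ j ≤ c; (d) for each j, ξ_j is the ≻-greatest positive root ξ such that ξ ≺ ξ_{j−1} (no such constraint when j = 1), ξ ∉ M(D), and w_i(ξ) > 0 for all 1 ≤ i < j. -/

import Mathlib

/-- A positive root `(i,j)`: `n ≥ i > j ≥ 1`. -/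
def IsPosRoot (n : ℕ) (γ : ℕ × ℕ) : Prop := 1 ≤ γ.2 ∧ γ.2 < γ.1 ∧ γ.1 ≤ n

/-- `γ` is the sum of the roots `α` and `β` (in either order):
`(i,j) + (j,k) = (i,k)`. -/
def RootSum (α β γ : ℕ × ℕ) : Prop :=
  (α.2 = β.1 ∧ γ = (α.1, β.2)) ∨ (β.2 = α.1 ∧ γ = (β.1, α.2))

/-- A basic subset: a set of positive roots with at most one root in each
row and at most one root in each column. -/
def IsBasic (n : ℕ) (D : Set (ℕ × ℕ)) : Prop :=
  (∀ γ ∈ D, IsPosRoot n γ) ∧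
  (∀ α ∈ D, ∀ β ∈ D, α.1 = β.1 → α = β) ∧
  (∀ α ∈ D, ∀ β ∈ D, α.2 = β.2 → α = β)

/-- A positive root `α` is `D`-singular if `α + β ∈ D` for some positive root `β`. -/
def IsSingular (n : ℕ) (D : Set (ℕ × ℕ)) (α : ℕ × ℕ) : Prop :=
  IsPosRoot n α ∧ ∃ β γ, IsPosRoot n β ∧ RootSum α β γ ∧ γ ∈ D

/-- `M(D) = R(D) \ D`, where `R(D)` is the set of `D`-regular positive roots. -/
def MD (n : ℕ) (D : Set (ℕ × ℕ)) : Set (ℕ × ℕ) :=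
  {γ | IsPosRoot n γ ∧ ¬ IsSingular n D γ ∧ γ ∉ D}
/-- The list `[w_D(1), …, w_D(j)]`, defined recursively: `w_D(j)` is the
greatest `i ∈ {1,…,n}` with `(i,j) ∉ M(D)` and `i ∉ {w_D(1),…,w_D(j-1)}`. -/
noncomputable def wDVals (n : ℕ) (D : Set (ℕ × ℕ)) : ℕ → List ℕ
  | 0 => []
  | j + 1 =>
    let prev := wDVals n D j
    prev ++ [sSup {i | 1 ≤ i ∧ i ≤ n ∧ (i, j + 1) ∉ MD n D ∧ i ∉ prev}]

/-- The permutation `w_D` associated with a basic subset `D` (as a map `ℕ → ℕ`,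
meaningful on `{1,…,n}`). -/
noncomputable def wD (n : ℕ) (D : Set (ℕ × ℕ)) (j : ℕ) : ℕ :=
  ((wDVals n D j).getLast?).getD 0
open scoped Classical

/-- Marks used in the diagram of a basic subset. -/
inductive Mark : Type
  | otimes : Mark
  | plus : Mark
  | minus : Mark
  | bullet : Mark
deriving DecidableEq

/-- A marking state of the diagram: a partial assignment of marks to places. -/
abbrev MState : Type := ℕ × ℕ → Option Mark

/-- Step 0 of the diagram construction: every root of `M(D)` is marked `•`. -/
noncomputable def initMark (n : ℕ) (D : Set (ℕ × ℕ)) : MState :=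
  fun γ => if γ ∈ MD n D then some Mark.bullet else none

/-- One step of the diagram construction: mark `ξ` with `⊗`, and for every
decomposition `ξ = α + β` with `col α = col ξ`, `row β = row ξ` and both
`α`, `β` unmarked, mark `α` with `+` and `β` with `−`. -/
noncomputable def markStep (s : MState) (ξ : ℕ × ℕ) : MState :=
  fun γ =>
    if γ = ξ then some Mark.otimes
    else if γ.2 = ξ.2 ∧ ξ.2 < γ.1 ∧ γ.1 < ξ.1 ∧ s γ = none ∧ s (ξ.1, γ.1) = none then
      some Mark.plus
    else if γ.1 = ξ.1 ∧ ξ.2 < γ.2 ∧ γ.2 < ξ.1 ∧ s γ = none ∧ s (γ.2, ξ.2) = none then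
      some Mark.minus
    else s γ

/-- The list of all positive roots in decreasing order with respect to `≻`
(`(k,m) ≻ (i,j)` iff `m < j`, or `m = j` and `k > i`). -/
def rootList (n : ℕ) : List (ℕ × ℕ) :=
  (List.range n).flatMap (fun j0 =>
    (List.range n).filterMap (fun k =>
      if j0 + 1 < n - k then some (n - k, j0 + 1) else none))

/-- Run the diagram construction along a list of places, recording at each
step `i` the pair (`ξ_i`, state after step `i`). -/
noncomputable def diagRun (s : MState) : List (ℕ × ℕ) → List ((ℕ × ℕ) × MState)
  | [] => []
  | ξ :: rest =>
    if s ξ = none then (ξ, markStep s ξ) :: diagRun (markStep s ξ) rest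
    else diagRun s rest

/-- The full run of the diagram construction for a basic subset `D`. -/
noncomputable def diagSeq (n : ℕ) (D : Set (ℕ × ℕ)) : List ((ℕ × ℕ) × MState) :=
  diagRun (initMark n D) (rootList n)

/-- `c`, the number of steps (= number of `⊗` marks) of the diagram. -/
noncomputable def numSteps (n : ℕ) (D : Set (ℕ × ℕ)) : ℕ := (diagSeq n D).length

/-- `ξ_i`, the root marked `⊗` at step `i` (for `1 ≤ i ≤ c`). -/
noncomputable def xiRoot (n : ℕ) (D : Set (ℕ × ℕ)) (i : ℕ) : ℕ × ℕ :=
  (((diagSeq n D).getD (i - 1) ((0, 0), initMark n D))).1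

/-- The state of the diagram after step `i` (for `0 ≤ i ≤ c`); the state
"before step `i`" is `stateAfter n D (i-1)`. -/
noncomputable def stateAfter (n : ℕ) (D : Set (ℕ × ℕ)) : ℕ → MState
  | 0 => initMark n D
  | i + 1 => (((diagSeq n D).getD i ((0, 0), initMark n D))).2

/-- `C(D)`: the set of roots marked `⊗` on the diagram. -/
noncomputable def CD (n : ℕ) (D : Set (ℕ × ℕ)) : Set (ℕ × ℕ) :=
  {γ | γ ∈ (diagSeq n D).map Prod.fst}

/-- `A_γ`: the set of roots of `C(D)` in the same row as `γ`, strictly to the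
left of `γ`. -/
noncomputable def AD (n : ℕ) (D : Set (ℕ × ℕ)) (γ : ℕ × ℕ) : Set (ℕ × ℕ) :=
  {γ' | γ' ∈ CD n D ∧ γ'.1 = γ.1 ∧ γ'.2 < γ.2}
/-- `w_i = r_{ξ_1} ∘ ⋯ ∘ r_{ξ_i}` as a permutation of `ℕ` (each reflection
`r_{(a,b)}` being the transposition of `a` and `b`). -/
noncomputable def wStep (n : ℕ) (D : Set (ℕ × ℕ)) (i : ℕ) : Equiv.Perm ℕ :=
  (List.range i).foldl
    (fun w k => w * Equiv.swap (xiRoot n D (k + 1)).1 (xiRoot n D (k + 1)).2) 1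

/-- `w(γ) > 0`: the image of the root `γ` under `w` is a positive root. -/
def PosUnder (w : Equiv.Perm ℕ) (γ : ℕ × ℕ) : Prop := w γ.2 < w γ.1

/-- The linear order `≻` on positive roots: `(k,m) ≻ (i,j)` iff `m < j`, or
`m = j` and `k > i`.  `SuccG a b` means `a ≻ b`. -/
def SuccG (a b : ℕ × ℕ) : Prop := a.2 < b.2 ∨ (a.2 = b.2 ∧ b.1 < a.1)

theorem mem_MD_iff {n : ℕ} {D : Set (ℕ × ℕ)} (hD : IsBasic n D) {x y : ℕ}
    (h : IsPosRoot n (x, y)) :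
    (x, y) ∈ MD n D ↔ (∀ k, x ≤ k → (k, y) ∉ D) ∧ ∀ k ≤ y, (x, k) ∉ D := by
  constructor
  · rintro ⟨-, hs, hd⟩
    refine ⟨fun k hk hkD => ?_, fun k hk hkD => ?_⟩
    · rcases hk.eq_or_lt with rfl | hlt
      · exact hd hkD
      · have := hD.1 _ hkD
        refine hs ⟨h, (k, x), (k, y), ?_, Or.inr ⟨rfl, rfl⟩, hkD⟩
        simp only [IsPosRoot] at *
        omega
    · rcases hk.eq_or_lt with rfl | hlt
      · exact hd hkD
      · have := hD.1 _ hkD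
        refine hs ⟨h, (y, k), (x, k), ?_, Or.inl ⟨rfl, rfl⟩, hkD⟩
        simp only [IsPosRoot] at *
        omega
  · rintro ⟨hc, hr⟩
    refine ⟨h, ?_, hc x le_rfl⟩
    rintro ⟨-, ⟨p, q⟩, γ, hβ, ⟨h1, rfl⟩ | ⟨h1, rfl⟩, hγ⟩ <;> simp only [IsPosRoot] at *
    · exact hr q (by omega) hγ
    · exact hc p (by omega) hγ

theorem wDVals_succ_eq (n : ℕ) (D : Set (ℕ × ℕ)) (j : ℕ) :
    wDVals n D (j + 1) = wDVals n D j ++ [wD n D (j + 1)] := by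
  simp [wD, wDVals]

theorem wD_succ (n : ℕ) (D : Set (ℕ × ℕ)) (j : ℕ) :
    wD n D (j + 1) = sSup {i | 1 ≤ i ∧ i ≤ n ∧ (i, j + 1) ∉ MD n D ∧ i ∉ wDVals n D j} := by
  simp [wD, wDVals]

theorem mem_wDVals {n : ℕ} {D : Set (ℕ × ℕ)} {i j : ℕ} :
    i ∈ wDVals n D j ↔ ∃ y, 1 ≤ y ∧ y ≤ j ∧ wD n D y = i := by
  induction j with
  | zero =>
    simp only [wDVals, List.not_mem_nil, false_iff]
    rintro ⟨y, h1, h2, -⟩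
    omega
  | succ j ih =>
    rw [wDVals_succ_eq, List.mem_append, ih, List.mem_singleton]
    constructor
    · rintro (⟨y, h1, h2, h3⟩ | rfl)
      · exact ⟨y, h1, by omega, h3⟩
      · exact ⟨j + 1, by omega, le_rfl, rfl⟩
    · rintro ⟨y, h1, h2, h3⟩
      rcases h2.eq_or_lt with rfl | hlt
      · exact Or.inr h3.symm
      · exact Or.inl ⟨y, h1, by omega, h3⟩

theorem mem_rootList {n : ℕ} {γ : ℕ × ℕ} : γ ∈ rootList n ↔ IsPosRoot n γ := by
  obtain ⟨x, y⟩ := γ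
  simp only [rootList, List.mem_flatMap, List.mem_range, List.mem_filterMap, IsPosRoot]
  constructor
  · rintro ⟨j, hj, k, hk, h⟩
    split_ifs at h with hlt
    simp only [Option.some.injEq, Prod.mk.injEq] at h
    omega
  · rintro ⟨h1, h2, h3⟩
    refine ⟨y - 1, by omega, n - x, by omega, ?_⟩
    rw [if_pos (by omega)]
    simp only [Option.some.injEq, Prod.mk.injEq]
    omega

theorem pairwise_rootList (n : ℕ) : (rootList n).Pairwise SuccG := by
  rw [rootList, List.pairwise_flatMap]
  constructor
  · intro j _
    rw [List.pairwise_filterMap]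
    refine List.pairwise_lt_range.imp fun {k l} hkl => ?_
    intro p hp q hq
    split_ifs at hp hq
    simp only [Option.some.injEq] at hp hq
    subst hp hq
    right
    simp only [true_and]
    omega
  · refine List.pairwise_lt_range.imp fun {i j} hij => ?_
    intro p hp q hq
    simp only [List.mem_filterMap] at hp hq
    obtain ⟨k, -, hp⟩ := hp
    obtain ⟨l, -, hq⟩ := hq
    split_ifs at hp hq
    simp only [Option.some.injEq] at hp hq
    subst hp hq
    left
    simp only
    omega

theorem SuccG.irrefl (γ : ℕ × ℕ) : ¬ SuccG γ γ := by
  simp [SuccG]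

theorem SuccG.asymm {γ δ : ℕ × ℕ} (h : SuccG γ δ) : ¬ SuccG δ γ := by
  simp only [SuccG] at *
  omega

theorem eq_none_of_markStep {s : MState} {ξ γ : ℕ × ℕ} (h : markStep s ξ γ = none) :
    s γ = none := by
  simp only [markStep] at h
  split_ifs at h
  exact h

/-- The state of the diagram construction when the roots of columns `< b` and the roots
of column `b` in rows `> a` have been processed, and `w` is the product of the
reflections found so far. -/
structure DiagInv (n : ℕ) (D : Set (ℕ × ℕ)) (b a : ℕ) (s : MState) (w : Equiv.Perm ℕ) :
    Prop where
  one_le : 1 ≤ b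
  le_row : b ≤ a
  row_le : a ≤ n
  unmarked_iff : ∀ x y, IsPosRoot n (x, y) → (b < y ∨ y = b ∧ x ≤ a) →
    (s (x, y) = none ↔ (x, y) ∉ MD n D ∧ w y < w x)
  range_iff : ∀ x, (1 ≤ w x ∧ w x ≤ n) ↔ (1 ≤ x ∧ x ≤ n)
  inactive : ∀ x, b < x → (∀ y ≤ b, (x, y) ∉ D) → w x = x
  pending : ∀ x ≤ a, (x, b) ∈ D → w x = x
  active_le : ∀ x y, b < x → y ≤ b → (x, y) ∈ D → (y < b ∨ a < x) → w x ≤ b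
  active_lt : ∀ x y, a < x → y ≤ b → (x, y) ∈ D → w x < w b
  col_eq : ∀ x, a < x → (x, b) ∈ D → w b = x
  col_le : (∀ x, a < x → (x, b) ∉ D) → w b ≤ b
  eq_wD : ∀ y, 1 ≤ y → y < b → w y = wD n D y

namespace DiagInv

variable {n : ℕ} {D : Set (ℕ × ℕ)} {b a : ℕ} {s : MState} {w : Equiv.Perm ℕ}

theorem start (hn : 1 ≤ n) (hD : IsBasic n D) : DiagInv n D 1 n (initMark n D) 1 where
  one_le := le_rfl
  le_row := hn
  row_le := le_rfl
  unmarked_iff x y hxy _ := by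
    have : y < x := hxy.2.1
    simp [initMark, this]
  range_iff x := by simp
  inactive x _ _ := rfl
  pending x _ _ := rfl
  active_le x y _ hy hxy h := by
    have := hD.1 _ hxy
    simp only [IsPosRoot] at this
    omega
  active_lt x y h _ hxy := by
    have := hD.1 _ hxy
    simp only [IsPosRoot] at this
    omega
  col_eq x h hxy := by
    have := hD.1 _ hxy
    simp only [IsPosRoot] at this
    omega
  col_le _ := le_rfl
  eq_wD y h1 h2 := by omega

theorem wD_col (hD : IsBasic n D) (h : DiagInv n D b b s w) : w b = wD n D b := by
  have hb := h.one_le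
  have hbn := h.row_le
  obtain ⟨c, rfl⟩ : ∃ c, b = c + 1 := ⟨b - 1, by omega⟩
  rw [wD_succ]
  symm
  refine IsGreatest.csSup_eq ⟨?_, ?_⟩
  · have hr := (h.range_iff (c + 1)).2 ⟨hb, hbn⟩
    refine ⟨hr.1, hr.2, fun hM => ?_, fun hm => ?_⟩
    · have hp := hM.1
      rw [mem_MD_iff hD hp] at hM
      simp only [IsPosRoot] at hp
      by_cases hx : ∃ x, c + 1 < x ∧ (x, c + 1) ∈ D
      · obtain ⟨x, hx, hxD⟩ := hx
        exact hM.1 x (h.col_eq x hx hxD).le hxD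
      · push Not at hx
        have := h.col_le hx
        omega
    · obtain ⟨y, h1, h2, h3⟩ := mem_wDVals.1 hm
      rw [← h.eq_wD y h1 (by omega)] at h3
      have := w.injective h3
      omega
  · rintro i ⟨h1, h2, h3, h4⟩
    obtain ⟨x, rfl⟩ := w.surjective i
    have hx := (h.range_iff x).1 ⟨h1, h2⟩
    rcases lt_trichotomy x (c + 1) with hlt | rfl | hgt
    · exact absurd (mem_wDVals.2 ⟨x, hx.1, by omega, (h.eq_wD x hx.1 hlt).symm⟩) h4
    · exact le_rfl
    · by_cases hact : ∃ y ≤ c + 1, (x, y) ∈ D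
      · obtain ⟨y, hy, hyD⟩ := hact
        exact (h.active_lt x y hgt hy hyD).le
      · push Not at hact
        rw [h.inactive x hgt hact] at h3 ⊢
        rw [mem_MD_iff hD ⟨by omega, hgt, hx.2⟩] at h3
        have : ∃ k, x ≤ k ∧ (k, c + 1) ∈ D := by
          by_contra! hk
          exact h3 ⟨hk, hact⟩
        obtain ⟨k, hk, hkD⟩ := this
        rw [h.col_eq k (by omega) hkD]
        exact hk

theorem next_column (hD : IsBasic n D) (h : DiagInv n D b b s w) (hb : b < n) :
    DiagInv n D (b + 1) n s w where
  one_le := by omega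
  le_row := hb
  row_le := le_rfl
  unmarked_iff x y hxy hy := h.unmarked_iff x y hxy (by omega)
  range_iff := h.range_iff
  inactive x hx hy := h.inactive x (by omega) fun y h => hy y (by omega)
  pending x _ hxD := by
    have := hD.1 _ hxD
    refine h.inactive x (by simp only [IsPosRoot] at this; omega) fun y hy hyD => ?_
    have := congrArg Prod.snd (hD.2.1 _ hxD _ hyD rfl)
    simp only at this
    omega
  active_le x y hx hy hxy hor := by
    have := hD.1 _ hxy
    simp only [IsPosRoot] at this
    have := h.active_le x y (by omega) (by omega) hxy (by omega)
    omega
  active_lt x y hx _ hxy := by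
    have := hD.1 _ hxy
    simp only [IsPosRoot] at this
    omega
  col_eq x hx hxy := by
    have := hD.1 _ hxy
    simp only [IsPosRoot] at this
    omega
  col_le _ := by
    by_cases hact : ∃ y ≤ b, (b + 1, y) ∈ D
    · obtain ⟨y, hy, hyD⟩ := hact
      have := h.active_le (b + 1) y (by omega) hy hyD (by omega)
      omega
    · push Not at hact
      exact (h.inactive (b + 1) (by omega) hact).le
  eq_wD y h1 h2 := by
    rcases Nat.lt_succ_iff_lt_or_eq.1 h2 with hlt | rfl
    · exact h.eq_wD y h1 hlt
    · exact h.wD_col hD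

theorem not_mem_MD_of_active (hD : IsBasic n D) {x y k : ℕ} (hk : k ≤ y) (hx : (x, k) ∈ D) :
    (x, y) ∉ MD n D := fun hM => ((mem_MD_iff hD hM.1).1 hM).2 k hk hx

theorem col_le_of_mem (hD : IsBasic n D) (h : DiagInv n D b a s w) (hab : (a, b) ∈ D) :
    w b ≤ b := by
  refine h.col_le fun x hx hxD => ?_
  have := congrArg Prod.fst (hD.2.2 _ hxD _ hab rfl)
  simp only at this
  omega

theorem unmarked_of_mem (hD : IsBasic n D) (h : DiagInv n D b a s w) (hab : (a, b) ∈ D) :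
    s (a, b) = none := by
  have hp := hD.1 _ hab
  refine (h.unmarked_iff a b hp (Or.inr ⟨rfl, le_rfl⟩)).2 ⟨fun hM => hM.2.2 hab, ?_⟩
  rw [h.pending a le_rfl hab]
  exact (h.col_le_of_mem hD hab).trans_lt hp.2.1

theorem skip (hD : IsBasic n D) (h : DiagInv n D b a s w) (hlt : b < a)
    (hs : s (a, b) ≠ none) : DiagInv n D b (a - 1) s w := by
  have hp : IsPosRoot n (a, b) := ⟨h.one_le, hlt, h.row_le⟩
  have hnD : (a, b) ∉ D := fun hab => hs (h.unmarked_of_mem hD hab)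
  refine ⟨h.one_le, by omega, by have := h.row_le; omega,
    fun x y hxy hy => h.unmarked_iff x y hxy (by omega), h.range_iff, h.inactive,
    fun x hx => h.pending x (by omega), ?_, ?_, ?_, ?_, h.eq_wD⟩
  · intro x y hx hy hxy hor
    refine h.active_le x y hx hy hxy ?_
    by_contra hcon
    obtain ⟨rfl, rfl⟩ : x = a ∧ y = b := by omega
    exact hnD hxy
  · intro x y hx hy hxy
    rcases (show x = a ∨ a < x by omega) with rfl | hax
    · rw [Ne, h.unmarked_iff x b hp (Or.inr ⟨rfl, le_rfl⟩)] at hs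
      have hne : w x ≠ w b := fun he => by
        have := w.injective he
        omega
      have : ¬ w b < w x := fun hw => hs ⟨not_mem_MD_of_active hD hy hxy, hw⟩
      omega
    · exact h.active_lt x y hax hy hxy
  · intro x hx hxD
    rcases (show x = a ∨ a < x by omega) with rfl | hax
    · exact absurd hxD hnD
    · exact h.col_eq x hax hxD
  · exact fun hx => h.col_le fun x hax => hx x (by omega)

theorem exists_active (hD : IsBasic n D) (h : DiagInv n D b a s w) (hlt : b < a)
    (hs : s (a, b) = none) : ∃ k ≤ b, (a, k) ∈ D := by
  have hp : IsPosRoot n (a, b) := ⟨h.one_le, hlt, h.row_le⟩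
  obtain ⟨hM, hw⟩ := (h.unmarked_iff a b hp (Or.inr ⟨rfl, le_rfl⟩)).1 hs
  by_contra! hact
  rw [h.inactive a hlt hact] at hw
  refine hM ((mem_MD_iff hD hp).2 ⟨fun k hk hkD => ?_, hact⟩)
  rcases hk.eq_or_lt with rfl | hk
  · exact hact b le_rfl hkD
  · rw [h.col_eq k hk hkD] at hw
    omega

theorem val_le_self (h : DiagInv n D b a s w) {x : ℕ} (hx : b < x) :
    w x ≤ x := by
  by_cases hact : ∃ y ≤ b, (x, y) ∈ D
  · obtain ⟨y, hy, hyD⟩ := hact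
    by_cases hc : y < b ∨ a < x
    · have := h.active_le x y hx hy hyD hc
      omega
    · obtain rfl : y = b := by omega
      exact (h.pending x (by omega) hyD).le
  · push Not at hact
    exact (h.inactive x hx hact).le

theorem not_between_of_mem_MD (hD : IsBasic n D) (h : DiagInv n D b a s w)
    (hs : s (a, b) = none) {c : ℕ} (hbc : b < c) (hca : c < a) (hM : (c, b) ∈ MD n D) :
    w a < w c := by
  obtain ⟨hcol, hrow⟩ := (mem_MD_iff hD hM.1).1 hM
  obtain ⟨k, hk, hkD⟩ := h.exists_active hD (hbc.trans hca) hs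
  rw [h.inactive c hbc hrow]
  rcases hk.eq_or_lt with rfl | hk
  · exact absurd hkD (hcol a hca.le)
  · have := h.active_le a k (hbc.trans hca) hk.le hkD (Or.inl hk)
    omega

theorem lt_iff_below (h : DiagInv n D b a s w) (hlt : b < a)
    (hw : w b < w a) {c : ℕ} (hac : a < c) : w a < w c ↔ w b < w c := by
  refine ⟨hw.trans, fun hbc => ?_⟩
  by_cases hact : ∃ y ≤ b, (c, y) ∈ D
  · obtain ⟨y, hy, hyD⟩ := hact
    have := h.active_lt c y hac hy hyD
    omega
  · push Not at hact
    rw [h.inactive c (hlt.trans hac) hact]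
    exact (h.val_le_self hlt).trans_lt hac

theorem unmarked_iff_markStep (hD : IsBasic n D) (h : DiagInv n D b a s w) (hlt : b < a)
    (hs : s (a, b) = none) {x y : ℕ} (hxy : IsPosRoot n (x, y))
    (hy : b < y ∨ y = b ∧ x < a) :
    markStep s (a, b) (x, y) = none ↔
      (x, y) ∉ MD n D ∧ (w * Equiv.swap a b) y < (w * Equiv.swap a b) x := by
  have hp : IsPosRoot n (a, b) := ⟨h.one_le, hlt, h.row_le⟩
  have hw := ((h.unmarked_iff a b hp (Or.inr ⟨rfl, le_rfl⟩)).1 hs).2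
  obtain ⟨k, hk, hkD⟩ := h.exists_active hD hlt hs
  have hold := h.unmarked_iff x y hxy (by omega)
  have hpos := hxy
  simp only [IsPosRoot] at hxy
  have han := h.row_le
  have hb1 := h.one_le
  have hsw : ∀ z, z ≠ a → z ≠ b → (w * Equiv.swap a b) z = w z := fun z h1 h2 => by
    rw [Equiv.Perm.mul_apply, Equiv.swap_apply_of_ne_of_ne h1 h2]
  have hswa : (w * Equiv.swap a b) a = w b := by simp
  have hswb : (w * Equiv.swap a b) b = w a := by simp
  rcases hy with hby | ⟨rfl, hxa⟩
  · by_cases hx : x = a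
    · subst hx
      have hM := not_mem_MD_of_active hD (hk.trans hby.le) hkD
      have hcol := h.unmarked_iff y b ⟨hb1, hby, by omega⟩ (Or.inr ⟨rfl, by omega⟩)
      have hbet := h.not_between_of_mem_MD hD hs hby hxy.2.1
      have hne : w y ≠ w b := fun he => by
        have := w.injective he
        omega
      rw [hswa, hsw y (by omega) (by omega)]
      simp only [markStep, Prod.mk.injEq]
      by_cases hMc : (y, b) ∈ MD n D
      · have := hbet hMc
        grind
      · grind
    · by_cases hya : y = a
      · subst hya
        rw [hswa, hsw x (by omega) (by omega), ← h.lt_iff_below hlt hw hxy.2.1, ← hold]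
        simp only [markStep, Prod.mk.injEq]
        grind
      · rw [hsw x hx (by omega), hsw y hya (by omega), ← hold]
        simp only [markStep, Prod.mk.injEq]
        grind
  · have hrow := h.unmarked_iff a x ⟨by omega, hxa, han⟩ (Or.inl hxy.2.1)
    have hM : (a, x) ∉ MD n D := not_mem_MD_of_active hD (hk.trans hxy.2.1.le) hkD
    have hne : w x ≠ w a := fun he => by
      have := w.injective he
      omega
    rw [hswb, hsw x (by omega) (by omega)]
    simp only [markStep, Prod.mk.injEq]
    grind

theorem mark (hD : IsBasic n D) (h : DiagInv n D b a s w) (hlt : b < a)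
    (hs : s (a, b) = none) :
    DiagInv n D b (a - 1) (markStep s (a, b)) (w * Equiv.swap a b) := by
  have hp : IsPosRoot n (a, b) := ⟨h.one_le, hlt, h.row_le⟩
  have hw := ((h.unmarked_iff a b hp (Or.inr ⟨rfl, le_rfl⟩)).1 hs).2
  obtain ⟨k, hk, hkD⟩ := h.exists_active hD hlt hs
  have han := h.row_le
  have hb1 := h.one_le
  have hsw : ∀ z, z ≠ a → z ≠ b → (w * Equiv.swap a b) z = w z := fun z h1 h2 => by
    rw [Equiv.Perm.mul_apply, Equiv.swap_apply_of_ne_of_ne h1 h2]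
  have hswa : (w * Equiv.swap a b) a = w b := by simp
  have hswb : (w * Equiv.swap a b) b = w a := by simp
  have hcol : w b ≤ b := by
    refine h.col_le fun x hx hxD => ?_
    have h1 := h.col_eq x hx hxD
    have h2 := h.val_le_self hlt
    omega
  refine ⟨hb1, by omega, by omega,
    fun x y hxy hy => h.unmarked_iff_markStep hD hlt hs hxy (by omega), ?_, ?_, ?_, ?_, ?_, ?_,
    ?_, ?_⟩
  · intro x
    rw [Equiv.Perm.mul_apply, h.range_iff]
    by_cases hxa : x = a
    · subst hxa
      rw [Equiv.swap_apply_left]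
      omega
    · by_cases hxb : x = b
      · subst hxb
        rw [Equiv.swap_apply_right]
        omega
      · rw [Equiv.swap_apply_of_ne_of_ne hxa hxb]
  · intro x hx hact
    rw [hsw x (by rintro rfl; exact hact k hk hkD) (by omega)]
    exact h.inactive x hx hact
  · intro x hx hxD
    have := (hD.1 _ hxD).2.1
    rw [hsw x (by omega) (by simp only at this; omega)]
    exact h.pending x (by omega) hxD
  · intro x y hx hy hxy hor
    by_cases hxa : x = a
    · rw [hxa, hswa]
      exact hcol
    · rw [hsw x hxa (by omega)]
      exact h.active_le x y hx hy hxy (by omega)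
  · intro x y hx hy hxy
    rw [hswb]
    by_cases hxa : x = a
    · rw [hxa, hswa]
      exact hw
    · rw [hsw x hxa (by omega)]
      exact (h.active_lt x y (by omega) hy hxy).trans hw
  · intro x hx hxD
    rw [hswb]
    rcases (show x = a ∨ a < x by omega) with rfl | hax
    · exact h.pending x le_rfl hxD
    · have := h.col_eq x hax hxD
      omega
  · intro hno
    rw [hswb]
    rcases hk.eq_or_lt with rfl | hk
    · exact absurd hkD (hno a (by omega))
    · exact h.active_le a k hlt hk.le hkD (Or.inl hk)
  · intro y h1 h2
    rw [hsw y (by omega) (by omega)]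
    exact h.eq_wD y h1 h2

end DiagInv

/-- The diagram construction in state `s`, with the roots of `L` still to be processed. -/
def RunInv (n : ℕ) (D : Set (ℕ × ℕ)) (L : List (ℕ × ℕ)) (s : MState) (w : Equiv.Perm ℕ) :
    Prop :=
  L.Pairwise SuccG ∧ ∃ b a, DiagInv n D b a s w ∧
    ∀ γ, γ ∈ L ↔ IsPosRoot n γ ∧ (b < γ.2 ∨ γ.2 = b ∧ γ.1 ≤ a)

namespace RunInv

variable {n : ℕ} {D : Set (ℕ × ℕ)} {L : List (ℕ × ℕ)} {s : MState} {w : Equiv.Perm ℕ}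
  {ξ : ℕ × ℕ}

theorem start (hn : 1 ≤ n) (hD : IsBasic n D) :
    RunInv n D (rootList n) (initMark n D) 1 := by
  refine ⟨pairwise_rootList n, 1, n, DiagInv.start hn hD, fun γ => ?_⟩
  simp only [mem_rootList, IsPosRoot]
  omega

theorem unmarked_iff (h : RunInv n D L s w) {γ : ℕ × ℕ} (hγ : γ ∈ L) :
    s γ = none ↔ γ ∉ MD n D ∧ PosUnder w γ := by
  obtain ⟨-, b, a, hi, hm⟩ := h
  obtain ⟨hp, hr⟩ := (hm γ).1 hγ
  exact hi.unmarked_iff γ.1 γ.2 hp hr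

theorem exists_position (hD : IsBasic n D) (h : RunInv n D (ξ :: L) s w) :
    DiagInv n D ξ.2 ξ.1 s w ∧ ξ.2 < ξ.1 ∧
      ∀ γ, γ ∈ L ↔ IsPosRoot n γ ∧ (ξ.2 < γ.2 ∨ γ.2 = ξ.2 ∧ γ.1 ≤ ξ.1 - 1) := by
  obtain ⟨hL, b, a, hi, hm⟩ := h
  obtain ⟨b, a, hi, hlt, hm⟩ : ∃ b a, DiagInv n D b a s w ∧ b < a ∧
      ∀ γ, γ ∈ ξ :: L ↔ IsPosRoot n γ ∧ (b < γ.2 ∨ γ.2 = b ∧ γ.1 ≤ a) := by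
    rcases hi.le_row.eq_or_lt with rfl | hlt
    · have hξ := (hm ξ).1 List.mem_cons_self
      simp only [IsPosRoot] at hξ
      refine ⟨b + 1, n, hi.next_column hD (by omega), by omega, fun γ => ?_⟩
      rw [hm]
      simp only [IsPosRoot]
      omega
    · exact ⟨b, a, hi, hlt, hm⟩
  have hab : (a, b) ∈ ξ :: L :=
    (hm _).2 ⟨⟨hi.one_le, hlt, hi.row_le⟩, Or.inr ⟨rfl, le_rfl⟩⟩
  rw [List.pairwise_cons] at hL
  have hξ := (hm ξ).1 List.mem_cons_self
  obtain rfl : (a, b) = ξ := by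
    rcases List.mem_cons.1 hab with h | h
    · exact h
    · have := hL.1 _ h
      simp only [SuccG] at this
      omega
  refine ⟨hi, hlt, fun γ => ?_⟩
  constructor
  · intro hγ
    have h1 := (hm γ).1 (List.mem_cons_of_mem _ hγ)
    have h2 := hL.1 _ hγ
    simp only [SuccG] at h2
    refine ⟨h1.1, ?_⟩
    simp only
    omega
  · rintro ⟨hγ, hor⟩
    simp only at hor
    rcases List.mem_cons.1 ((hm γ).2 ⟨hγ, by omega⟩) with rfl | h
    · simp only at hor
      omega
    · exact h

theorem skip (hD : IsBasic n D) (h : RunInv n D (ξ :: L) s w) (hs : s ξ ≠ none) :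
    RunInv n D L s w := by
  obtain ⟨hi, hlt, hm⟩ := h.exists_position hD
  exact ⟨h.1.of_cons, _, _, hi.skip hD hlt hs, hm⟩

theorem mark (hD : IsBasic n D) (h : RunInv n D (ξ :: L) s w) (hs : s ξ = none) :
    RunInv n D L (markStep s ξ) (w * Equiv.swap ξ.1 ξ.2) := by
  obtain ⟨hi, hlt, hm⟩ := h.exists_position hD
  exact ⟨h.1.of_cons, _, _, hi.mark hD hlt hs, hm⟩

theorem eq_wD (hD : IsBasic n D) (h : RunInv n D [] s w) {j : ℕ} (h1 : 1 ≤ j) (hj : j ≤ n) :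
    w j = wD n D j := by
  obtain ⟨-, b, a, hi, hm⟩ := h
  have hba := hi.le_row
  have han := hi.row_le
  have hb1 := hi.one_le
  obtain rfl : b = a := by
    by_contra hne
    exact List.not_mem_nil ((hm (a, b)).2
      ⟨⟨hi.one_le, lt_of_le_of_ne hba hne, han⟩, Or.inr ⟨rfl, le_rfl⟩⟩)
  have hbn : n ≤ b + 1 := by
    by_contra! hlt
    exact List.not_mem_nil ((hm (n, b + 1)).2
      ⟨⟨Nat.succ_pos b, hlt, le_rfl⟩, Or.inl (Nat.lt_succ_self b)⟩)
  have hfinal : DiagInv n D n n s w := by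
    rcases han.eq_or_lt with rfl | hlt
    · exact hi
    · obtain rfl : n = b + 1 := by omega
      exact hi.next_column hD hlt
  rcases hj.eq_or_lt with rfl | hlt
  · exact hfinal.wD_col hD
  · exact hfinal.eq_wD j h1 hlt

theorem nil_of_diagRun_eq_nil (hD : IsBasic n D) (h : RunInv n D L s w)
    (hr : diagRun s L = []) : RunInv n D [] s w := by
  induction L with
  | nil => exact h
  | cons ξ L ih =>
    rw [diagRun] at hr
    split_ifs at hr with hs
    exact ih (h.skip hD hs) hr

end RunInv

theorem mem_and_unmarked_of_mem_diagRun {L : List (ℕ × ℕ)} {s : MState}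
    {p : (ℕ × ℕ) × MState} (hp : p ∈ diagRun s L) : p.1 ∈ L ∧ s p.1 = none := by
  induction L generalizing s with
  | nil => simp [diagRun] at hp
  | cons ξ L ih =>
    rw [diagRun] at hp
    split_ifs at hp with hs
    · rcases List.mem_cons.1 hp with rfl | hp
      · exact ⟨List.mem_cons_self, hs⟩
      · exact ⟨List.mem_cons_of_mem _ (ih hp).1, eq_none_of_markStep (ih hp).2⟩
    · exact ⟨List.mem_cons_of_mem _ (ih hp).1, (ih hp).2⟩

theorem eq_or_succG_of_diagRun_eq_cons {L : List (ℕ × ℕ)} {s : MState}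
    {p : (ℕ × ℕ) × MState} {l : List ((ℕ × ℕ) × MState)} (hL : L.Pairwise SuccG)
    (hp : diagRun s L = p :: l) {γ : ℕ × ℕ} (hγ : γ ∈ L) (hs : s γ = none) :
    γ = p.1 ∨ SuccG p.1 γ := by
  induction L with
  | nil => simp at hγ
  | cons ξ L ih =>
    rw [List.pairwise_cons] at hL
    rw [diagRun] at hp
    split_ifs at hp with hξ
    · rw [List.cons.injEq] at hp
      rw [← hp.1]
      exact (List.mem_cons.1 hγ).imp_right (hL.1 γ)
    · rcases List.mem_cons.1 hγ with rfl | h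
      · exact absurd hs hξ
      · exact ih hL.2 hp h

/-- The product `w * r_{ξ_1} * ⋯ * r_{ξ_k}` along a run of the diagram construction. -/
def reflProd (w : Equiv.Perm ℕ) (l : List ((ℕ × ℕ) × MState)) : Equiv.Perm ℕ :=
  l.foldl (fun w p => w * Equiv.swap p.1.1 p.1.2) w

/-- After `k` steps the construction has processed an initial segment of the list, ending
with the `k`-th marked root. -/
theorem RunInv.exists_suffix {n : ℕ} {D : Set (ℕ × ℕ)} (hD : IsBasic n D)
    {L : List (ℕ × ℕ)} {s : MState} {w : Equiv.Perm ℕ} (h : RunInv n D L s w) (k : ℕ)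
    (hk : k ≤ (diagRun s L).length) :
    ∃ pre R t, L = pre ++ R ∧ diagRun t R = (diagRun s L).drop k ∧
      RunInv n D R t (reflProd w ((diagRun s L).take k)) ∧
      (k = 0 → pre = []) ∧
      ∀ p, (diagRun s L)[k - 1]? = some p → 1 ≤ k → pre.getLast? = some p.1 := by
  induction L generalizing s w k with
  | nil =>
    obtain rfl : k = 0 := by simpa [diagRun] using hk
    exact ⟨[], [], s, rfl, rfl, by simpa [reflProd] using h, fun _ => rfl,
      fun p _ h => absurd h (by omega)⟩
  | cons ξ L ih =>
    rcases k with _ | k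
    · exact ⟨[], ξ :: L, s, rfl, rfl, by simpa [reflProd] using h, fun _ => rfl,
        fun p _ h => absurd h (by omega)⟩
    by_cases hs : s ξ = none
    · have hrun : diagRun s (ξ :: L) = (ξ, markStep s ξ) :: diagRun (markStep s ξ) L := by
        rw [diagRun, if_pos hs]
      rw [hrun] at hk ⊢
      obtain ⟨pre, R, t, rfl, h2, h3, h4, h5⟩ :=
        ih (h.mark hD hs) k (by simpa using hk)
      refine ⟨ξ :: pre, R, t, rfl, h2, by simpa [reflProd] using h3, by omega, ?_⟩
      intro p hp _
      rcases k with _ | k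
      · rw [h4 rfl]
        simp only [zero_add, Nat.sub_self, List.getElem?_cons_zero, Option.some.injEq] at hp
        simp [← hp]
      · have := h5 p (by simpa using hp) (by omega)
        rw [List.getLast?_cons, this]
        rfl
    · have hrun : diagRun s (ξ :: L) = diagRun s L := by rw [diagRun, if_neg hs]
      rw [hrun] at hk ⊢
      obtain ⟨pre, R, t, rfl, h2, h3, h4, h5⟩ := ih (h.skip hD hs) (k + 1) hk
      refine ⟨ξ :: pre, R, t, rfl, h2, h3, by omega, ?_⟩
      intro p hp h1
      rw [List.getLast?_cons, h5 p hp h1]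
      rfl

theorem wStep_eq_reflProd {n : ℕ} {D : Set (ℕ × ℕ)} {k : ℕ} (hk : k ≤ numSteps n D) :
    wStep n D k = reflProd 1 ((diagSeq n D).take k) := by
  induction k with
  | zero => simp [wStep, reflProd]
  | succ k ih =>
    have hlt : k < (diagSeq n D).length := hk
    have ih := ih (by omega)
    simp only [wStep, reflProd] at ih ⊢
    rw [List.range_succ, List.foldl_append, ih, List.take_add_one, List.foldl_append,
      List.getElem?_eq_getElem hlt]
    simp [xiRoot, List.getD, hlt]

theorem diagSeq_getElem?_pred {n : ℕ} {D : Set (ℕ × ℕ)} {j : ℕ} (h1 : 1 ≤ j)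
    (hj : j ≤ numSteps n D) :
    ∃ p, (diagSeq n D)[j - 1]? = some p ∧ p.1 = xiRoot n D j := by
  have hlt : j - 1 < (diagSeq n D).length := by
    simp only [numSteps] at hj
    omega
  exact ⟨_, List.getElem?_eq_getElem hlt, by simp [xiRoot, List.getD, hlt]⟩

theorem exists_suffix_diagSeq {n : ℕ} {D : Set (ℕ × ℕ)} (hn : 1 ≤ n) (hD : IsBasic n D)
    {k : ℕ} (hk : k ≤ numSteps n D) :
    ∃ pre L s, rootList n = pre ++ L ∧ diagRun s L = (diagSeq n D).drop k ∧
      RunInv n D L s (wStep n D k) ∧ (k = 0 → pre = []) ∧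
      (1 ≤ k → pre.getLast? = some (xiRoot n D k)) := by
  obtain ⟨pre, L, s, h1, h2, h3, h4, h5⟩ := (RunInv.start hn hD).exists_suffix hD k hk
  refine ⟨pre, L, s, h1, h2, ?_, h4, fun hk1 => ?_⟩
  · rw [wStep_eq_reflProd hk]
    exact h3
  · obtain ⟨p, hp, hpx⟩ := diagSeq_getElem?_pred hk1 hk
    rw [← hpx]
    exact h5 p hp hk1

theorem xiRoot_mem_suffix {n : ℕ} {D : Set (ℕ × ℕ)} {L : List (ℕ × ℕ)} {s : MState} {i j : ℕ}
    (hij : i < j) (hj : j ≤ numSteps n D) (hL : diagRun s L = (diagSeq n D).drop i) :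
    xiRoot n D j ∈ L ∧ s (xiRoot n D j) = none := by
  obtain ⟨p, hp, hpx⟩ := diagSeq_getElem?_pred (by omega) hj
  rw [← hpx]
  apply mem_and_unmarked_of_mem_diagRun
  rw [hL]
  apply List.mem_of_getElem? (i := j - 1 - i)
  rw [List.getElem?_drop, ← hp]
  congr 1
  omega

theorem xiRoot_spec {n : ℕ} {D : Set (ℕ × ℕ)} (hn : 1 ≤ n) (hD : IsBasic n D) {i j : ℕ}
    (hij : i < j) (hj : j ≤ numSteps n D) :
    IsPosRoot n (xiRoot n D j) ∧ (1 ≤ i → SuccG (xiRoot n D i) (xiRoot n D j)) ∧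
      xiRoot n D j ∉ MD n D ∧ PosUnder (wStep n D i) (xiRoot n D j) := by
  obtain ⟨pre, L, s, hroot, hrun, hinv, -, hlast⟩ :=
    exists_suffix_diagSeq hn hD (hij.le.trans hj)
  obtain ⟨hmem, hs⟩ := xiRoot_mem_suffix hij hj hrun
  refine ⟨mem_rootList.1 (hroot ▸ List.mem_append_right _ hmem), fun hi => ?_,
    (hinv.unmarked_iff hmem).1 hs⟩
  have hp := pairwise_rootList n
  rw [hroot, List.pairwise_append] at hp
  exact hp.2.2 _ (List.mem_of_getLast? (hlast hi)) _ hmem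

theorem eq_or_xiRoot_succG {n : ℕ} {D : Set (ℕ × ℕ)} (hn : 1 ≤ n) (hD : IsBasic n D) {j : ℕ}
    (hj : j + 1 ≤ numSteps n D) {ξ : ℕ × ℕ} (hξ : IsPosRoot n ξ)
    (hsucc : 1 ≤ j → SuccG (xiRoot n D j) ξ) (hM : ξ ∉ MD n D)
    (hpos : PosUnder (wStep n D j) ξ) :
    ξ = xiRoot n D (j + 1) ∨ SuccG (xiRoot n D (j + 1)) ξ := by
  obtain ⟨pre, L, s, hroot, hrun, hinv, hnil, hlast⟩ :=
    exists_suffix_diagSeq hn hD (Nat.le_of_succ_le hj)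
  have hmem : ξ ∈ L := by
    have hmem := mem_rootList.2 hξ
    rw [hroot] at hmem
    rcases List.mem_append.1 hmem with hpre | hL
    · exfalso
      rcases Nat.eq_zero_or_pos j with rfl | hj1
      · simp [hnil rfl] at hpre
      · have hp := pairwise_rootList n
        rw [hroot, List.pairwise_append] at hp
        obtain ⟨ys, hys⟩ := List.getLast?_eq_some_iff.1 (hlast hj1)
        rw [hys] at hpre
        rcases List.mem_append.1 hpre with h | h
        · rw [hys, List.pairwise_append] at hp
          exact (hsucc hj1).asymm (hp.1.2.2 _ h _ (by simp))
        · rw [List.mem_singleton] at h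
          exact SuccG.irrefl ξ (by simpa [← h] using hsucc hj1)
    · exact hL
  have hlt : j < (diagSeq n D).length := hj
  rw [List.drop_eq_getElem_cons hlt] at hrun
  have := eq_or_succG_of_diagRun_eq_cons hinv.1 hrun hmem
    ((hinv.unmarked_iff hmem).2 ⟨hM, hpos⟩)
  simpa [xiRoot, List.getD, hlt] using this

/-- with `C(D) = {ξ_1 ≻ … ≻ ξ_c}` and `w_i = r_{ξ_1} ⋯ r_{ξ_i}`:
(a) `w_D = r_{ξ_1} ∘ ⋯ ∘ r_{ξ_c}` (on `{1,…,n}`);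
(b) `w_i(ξ_j) > 0` for all `1 ≤ i < j ≤ c`;
(c) `ξ_j ∉ M(D)` for all `1 ≤ j ≤ c`;
(d) each `ξ_j` is the `≻`-greatest positive root `ξ` with `ξ ≺ ξ_{j-1}`
(no constraint when `j = 1`), `ξ ∉ M(D)`, and `w_i(ξ) > 0` for all `1 ≤ i < j`. -/
theorem stmt11 (n : ℕ) (hn : 2 ≤ n) (D : Set (ℕ × ℕ)) (hD : IsBasic n D) :
    (∀ j : ℕ, 1 ≤ j → j ≤ n → wStep n D (numSteps n D) j = wD n D j) ∧
    (∀ i j : ℕ, 1 ≤ i → i < j → j ≤ numSteps n D →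
      PosUnder (wStep n D i) (xiRoot n D j)) ∧
    (∀ j : ℕ, 1 ≤ j → j ≤ numSteps n D → xiRoot n D j ∉ MD n D) ∧
    (∀ j : ℕ, 1 ≤ j → j ≤ numSteps n D →
      ((IsPosRoot n (xiRoot n D j) ∧
        (2 ≤ j → SuccG (xiRoot n D (j - 1)) (xiRoot n D j)) ∧
        xiRoot n D j ∉ MD n D ∧
        (∀ i, 1 ≤ i → i < j → PosUnder (wStep n D i) (xiRoot n D j))) ∧
      ∀ ξ : ℕ × ℕ, IsPosRoot n ξ →
        (2 ≤ j → SuccG (xiRoot n D (j - 1)) ξ) →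
        ξ ∉ MD n D →
        (∀ i, 1 ≤ i → i < j → PosUnder (wStep n D i) ξ) →
        ξ = xiRoot n D j ∨ SuccG (xiRoot n D j) ξ)) := by
  have hn1 : 1 ≤ n := by omega
  refine ⟨fun j h1 hj => ?_, fun i j _ hij hj => (xiRoot_spec hn1 hD hij hj).2.2.2,
    fun j h1 hj => (xiRoot_spec hn1 hD h1 hj).2.2.1, fun j h1 hj => ⟨⟨?_, ?_, ?_, ?_⟩, ?_⟩⟩
  · obtain ⟨pre, L, s, -, hrun, hinv, -⟩ := exists_suffix_diagSeq hn1 hD (le_refl (numSteps n D))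
    rw [numSteps, List.drop_length] at hrun
    exact (hinv.nil_of_diagRun_eq_nil hD hrun).eq_wD hD h1 hj
  · exact (xiRoot_spec hn1 hD h1 hj).1
  · exact fun h2 => (xiRoot_spec hn1 hD (by omega) hj).2.1 (by omega)
  · exact (xiRoot_spec hn1 hD h1 hj).2.2.1
  · exact fun i _ hij => (xiRoot_spec hn1 hD hij hj).2.2.2
  · intro ξ hξ hsucc hM hpos
    obtain ⟨k, rfl⟩ : ∃ k, j = k + 1 := ⟨j - 1, by omega⟩
    refine eq_or_xiRoot_succG hn1 hD hj hξ (fun hk => hsucc (by omega)) hM ?_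
    rcases Nat.eq_zero_or_pos k with rfl | hk
    · exact hξ.2.1
    · exact hpos k hk (Nat.lt_succ_self k)
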